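/- arXiv:1901.01178 — 4 statements merged into one kernel-verified Lean document; each statement's English description precedes it below -/
import Mathlib

section
/- (Diagonal lemma, distributional form.) Let k ≥ 1, let T₁,…,T_k be finite sets, let T = T₁×⋯×T_k, and fix i ∈ {1,…,k}. For each x ∈ {0,1}^k let P_x be a probability distribution on T, and suppose there exist nonnegative functions q : {0,1}×Tᵢ → ℝ and p : {0,1}^{k−1}×T → ℝ such that for every x ∈ {0,1}^k and every τ = (τ₁,…,τ_k) ∈ T, P_x(τ) = q(xᵢ, τᵢ)·p(x_{−i}, τ), where x_{−i} denotes x with coordinate i removed. Then for all x, y ∈ {0,1}^k: h²(P_x, P_y) ≥ (1/2)·[ h²(P_x, P_{y[i←xᵢ]}) + h²(P_{x[i←yᵢ]}, P_y) ], where z[i←b] denotes the vector obtained from z by replacing its i-th coordinate by the bit b. -/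
noncomputable section

/-- Hellinger distance between two distributions on a finite set:
`h(P,Q) = (1/√2)·(∑ ω, (√(P ω) − √(Q ω))²)^{1/2}`. -/
def hellinger {Ω : Type*} [Fintype Ω] (P Q : Ω → ℝ) : ℝ :=
  (1 / Real.sqrt 2) * Real.sqrt (∑ ω, (Real.sqrt (P ω) - Real.sqrt (Q ω)) ^ 2)

theorem hellinger_sq_eq {Ω : Type*} [Fintype Ω] (P Q : Ω → ℝ)
    (hP : ∀ ω, 0 ≤ P ω) (hQ : ∀ ω, 0 ≤ Q ω) (hP1 : ∑ ω, P ω = 1) (hQ1 : ∑ ω, Q ω = 1) :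
    (hellinger P Q) ^ 2 = 1 - ∑ ω, Real.sqrt (P ω) * Real.sqrt (Q ω) := by
  have h : ∑ ω, (Real.sqrt (P ω) - Real.sqrt (Q ω)) ^ 2
      = ∑ ω, P ω + ∑ ω, Q ω - 2 * ∑ ω, Real.sqrt (P ω) * Real.sqrt (Q ω) := by
    rw [Finset.mul_sum, ← Finset.sum_add_distrib, ← Finset.sum_sub_distrib]
    refine Finset.sum_congr rfl fun ω _ => ?_
    have h1 := Real.sq_sqrt (hP ω)
    have h2 := Real.sq_sqrt (hQ ω)
    linear_combination h1 + h2
  unfold hellinger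
  rw [mul_pow, Real.sq_sqrt (Finset.sum_nonneg fun ω _ => sq_nonneg _), div_pow,
    Real.sq_sqrt (by norm_num), h, hP1, hQ1]
  ring

/-- Diagonal lemma, distributional form.  If the family of distributions
`P x` on `T = T₁ × ⋯ × T_k` factorizes as `P x τ = q (x i) (τ i) · p (x₋ᵢ) τ`
(rectangularity at coordinate `i`), then for all inputs `x y`,
`h²(P x, P y) ≥ (1/2)·(h²(P x, P y[i←xᵢ]) + h²(P x[i←yᵢ], P y))`. -/
theorem diagonal_lemma {k : ℕ} (hk : 1 ≤ k)
    (T : Fin k → Type*) [∀ j, Fintype (T j)] (i : Fin k)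
    (P : (Fin k → Bool) → (∀ j, T j) → ℝ)
    (hP0 : ∀ x τ, 0 ≤ P x τ) (hP1 : ∀ x, ∑ τ, P x τ = 1)
    (q : Bool → T i → ℝ) (hq : ∀ b t, 0 ≤ q b t)
    (p : ({j : Fin k // j ≠ i} → Bool) → (∀ j, T j) → ℝ)
    (hp : ∀ y τ, 0 ≤ p y τ)
    (hfact : ∀ (x : Fin k → Bool) (τ : ∀ j, T j),
      P x τ = q (x i) (τ i) * p (fun j => x j.1) τ) :
    ∀ x y : Fin k → Bool,
      (hellinger (P x) (P y)) ^ 2 ≥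
        (1 / 2) * ((hellinger (P x) (P (Function.update y i (x i)))) ^ 2 +
          (hellinger (P (Function.update x i (y i))) (P y)) ^ 2) := by
  intro x y
  have e (u v : Fin k → Bool) := hellinger_sq_eq (P u) (P v) (hP0 u) (hP0 v) (hP1 u) (hP1 v)
  have upd (u : Fin k → Bool) (b : Bool) (τ : ∀ j, T j) :
      P (Function.update u i b) τ = q b (τ i) * p (fun j => u j.1) τ := by
    rw [hfact, Function.update_self]
    congr 2
    funext j
    exact Function.update_of_ne j.2 _ _
  have key : 2 * ∑ τ, Real.sqrt (P x τ) * Real.sqrt (P y τ) ≤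
      ∑ τ, Real.sqrt (P x τ) * Real.sqrt (P (Function.update y i (x i)) τ) +
      ∑ τ, Real.sqrt (P (Function.update x i (y i)) τ) * Real.sqrt (P y τ) := by
    rw [Finset.mul_sum, ← Finset.sum_add_distrib]
    refine Finset.sum_le_sum fun τ _ => ?_
    rw [upd, upd, hfact x, hfact y, Real.sqrt_mul (hq _ _), Real.sqrt_mul (hq _ _),
      Real.sqrt_mul (hq _ _), Real.sqrt_mul (hq _ _)]
    have hcd := mul_nonneg (Real.sqrt_nonneg (p (fun j => x j.1) τ))
      (Real.sqrt_nonneg (p (fun j => y j.1) τ))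
    have := mul_nonneg hcd (sq_nonneg (Real.sqrt (q (x i) (τ i)) - Real.sqrt (q (y i) (τ i))))
    linarith
  rw [e, e, e]
  linarith
end
end

section
/- (Localization lemma, distributional form.) Let k ≥ 1, let T₁,…,T_k be finite sets, let T = T₁×⋯×T_k, and fix i ∈ {1,…,k}. Let P and Q be probability distributions on T such that there exist nonnegative functions a, b : Tᵢ → ℝ and c : T → ℝ with P(τ) = a(τᵢ)·c(τ) and Q(τ) = b(τᵢ)·c(τ) for all τ ∈ T. Let P⁽ⁱ⁾ and Q⁽ⁱ⁾ denote the marginal distributions of P and Q on the coordinate Tᵢ. Then h(P⁽ⁱ⁾, Q⁽ⁱ⁾) = h(P, Q). -/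
noncomputable section

open Classical in
/-- Localization lemma, distributional form.  If two distributions `P, Q` on the
product `T = T₁ × ⋯ × T_k` factorize as `P τ = a (τ i) · c τ` and
`Q τ = b (τ i) · c τ` with a common factor `c`, then the Hellinger distance between
their marginals on coordinate `i` equals the Hellinger distance between `P` and `Q`. -/
theorem localization_lemma {k : ℕ} (hk : 1 ≤ k)
    (T : Fin k → Type*) [∀ j, Fintype (T j)] (i : Fin k)
    (P Q : (∀ j, T j) → ℝ)
    (hP0 : ∀ τ, 0 ≤ P τ) (hP1 : ∑ τ, P τ = 1)
    (hQ0 : ∀ τ, 0 ≤ Q τ) (hQ1 : ∑ τ, Q τ = 1)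
    (a b : T i → ℝ) (c : (∀ j, T j) → ℝ)
    (ha : ∀ t, 0 ≤ a t) (hb : ∀ t, 0 ≤ b t) (hc : ∀ τ, 0 ≤ c τ)
    (hPfact : ∀ τ, P τ = a (τ i) * c τ)
    (hQfact : ∀ τ, Q τ = b (τ i) * c τ) :
    hellinger (fun t : T i => ∑ τ ∈ Finset.univ.filter (fun τ => τ i = t), P τ)
        (fun t : T i => ∑ τ ∈ Finset.univ.filter (fun τ => τ i = t), Q τ) =
      hellinger P Q := by
  have key : ∀ x y z : ℝ, 0 ≤ x → 0 ≤ y → 0 ≤ z →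
      (Real.sqrt (x * z) - Real.sqrt (y * z)) ^ 2 = (Real.sqrt x - Real.sqrt y) ^ 2 * z := by
    intro x y z hx hy hz
    rw [Real.sqrt_mul hx, Real.sqrt_mul hy, ← sub_mul, mul_pow, Real.sq_sqrt hz]
  unfold hellinger
  congr 2
  rw [← Finset.sum_fiberwise Finset.univ (fun τ : (∀ j, T j) => τ i)
    (fun τ => (Real.sqrt (P τ) - Real.sqrt (Q τ)) ^ 2)]
  refine Finset.sum_congr rfl fun t _ => ?_
  have h1 : ∀ (f : T i → ℝ) (R : (∀ j, T j) → ℝ), (∀ τ, R τ = f (τ i) * c τ) →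
      ∑ τ ∈ Finset.univ.filter (fun τ => τ i = t), R τ =
        f t * ∑ τ ∈ Finset.univ.filter (fun τ => τ i = t), c τ := by
    intro f R hR
    rw [Finset.mul_sum]
    refine Finset.sum_congr rfl fun τ hτ => ?_
    rw [hR, (Finset.mem_filter.mp hτ).2]
  beta_reduce
  rw [h1 a P hPfact, h1 b Q hQfact,
    key _ _ _ (ha t) (hb t) (Finset.sum_nonneg fun τ _ => hc τ), Finset.mul_sum]
  refine Finset.sum_congr rfl fun τ hτ => ?_
  rw [hPfact, hQfact, key _ _ _ (ha _) (hb _) (hc τ), (Finset.mem_filter.mp hτ).2]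
end
end

section
/- Let S be a finite set and let q₀, q₁, c₀, c₁, r : S → ℝ be nonnegative functions such that each of the five pointwise products q₀·c₀, q₁·c₁, q₁·c₀, q₀·r and q₁·r defines a probability distribution on S, and such that c₁(s) = r(s) for every s ∈ S with q₁(s) ≠ 0 (equivalently q₁·c₁ = q₁·r as distributions). Then h²(q₀·c₀, q₁·c₁) ≥ (1/2)·h²(q₀·r, q₁·r). -/
noncomputable section

theorem hellinger_sq_aux {Ω : Type*} [Fintype Ω] (P Q : Ω → ℝ) :
    hellinger P Q ^ 2 = (1 / 2) * ∑ ω, (Real.sqrt (P ω) - Real.sqrt (Q ω)) ^ 2 := by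
  unfold hellinger
  rw [mul_pow, Real.sq_sqrt (Finset.sum_nonneg fun _ _ => sq_nonneg _), div_pow,
    Real.sq_sqrt (by norm_num)]
  norm_num

/-- Abstract form of the specialized diagonal lemma: if the five pointwise products
`q₀·c₀, q₁·c₁, q₁·c₀, q₀·r, q₁·r` of nonnegative functions are probability
distributions on the finite set `S`, and `c₁ = r` wherever `q₁ ≠ 0`, then
`h²(q₀·c₀, q₁·c₁) ≥ (1/2)·h²(q₀·r, q₁·r)`. -/
theorem diagonal_lemma_special {S : Type*} [Fintype S]
    (q₀ q₁ c₀ c₁ r : S → ℝ)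
    (hq₀ : ∀ s, 0 ≤ q₀ s) (hq₁ : ∀ s, 0 ≤ q₁ s)
    (hc₀ : ∀ s, 0 ≤ c₀ s) (hc₁ : ∀ s, 0 ≤ c₁ s) (hr : ∀ s, 0 ≤ r s)
    (h1 : ∑ s, q₀ s * c₀ s = 1) (h2 : ∑ s, q₁ s * c₁ s = 1)
    (h3 : ∑ s, q₁ s * c₀ s = 1) (h4 : ∑ s, q₀ s * r s = 1)
    (h5 : ∑ s, q₁ s * r s = 1)
    (hcr : ∀ s, q₁ s ≠ 0 → c₁ s = r s) :
    (hellinger (fun s => q₀ s * c₀ s) (fun s => q₁ s * c₁ s)) ^ 2 ≥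
      (1 / 2) * (hellinger (fun s => q₀ s * r s) (fun s => q₁ s * r s)) ^ 2 := by
  rw [hellinger_sq_aux, hellinger_sq_aux]
  have key : ∀ s, q₀ s * c₀ s + q₁ s * r s - q₀ s * r s - q₁ s * c₀ s ≤
      2 * (Real.sqrt (q₀ s * c₀ s) - Real.sqrt (q₁ s * c₁ s)) ^ 2 -
        (Real.sqrt (q₀ s * r s) - Real.sqrt (q₁ s * r s)) ^ 2 := by
    intro s
    have e : q₁ s * c₁ s = q₁ s * r s := by
      by_cases h : q₁ s = 0
      · simp [h]
      · rw [hcr s h]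
    rw [e, Real.sqrt_mul (hq₀ s), Real.sqrt_mul (hq₁ s), Real.sqrt_mul (hq₀ s)]
    have ha := Real.sq_sqrt (hq₀ s)
    have hb := Real.sq_sqrt (hq₁ s)
    have hx := Real.sq_sqrt (hc₀ s)
    have hy := Real.sq_sqrt (hr s)
    have ha0 := Real.sqrt_nonneg (q₀ s)
    have hb0 := Real.sqrt_nonneg (q₁ s)
    generalize Real.sqrt (q₀ s) = a at *
    generalize Real.sqrt (q₁ s) = b at *
    generalize Real.sqrt (c₀ s) = x at *
    generalize Real.sqrt (r s) = y at *
    rw [← ha, ← hb, ← hx, ← hy]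
    have t1 : 0 ≤ a * b * (x - y) ^ 2 := by positivity
    have t2 : 0 ≤ ((a - b) * x) ^ 2 := by positivity
    nlinarith
  have hs := Finset.sum_le_sum fun s (_ : s ∈ Finset.univ) => key s
  simp only [Finset.sum_sub_distrib, Finset.sum_add_distrib, ← Finset.mul_sum] at hs
  rw [h1, h3, h4, h5] at hs
  linarith
end
end

section
/- Let k ≥ 1 and 0 ≤ ε ≤ 1/2. Let X = (X₁,…,X_k) be uniformly distributed on {0,1}^k, let R = (R₁,…,R_k) be discrete random variables with finite range independent of X, and let Π₁,…,Π_k be discrete random variables with finite range on the same probability space such that for every i ∈ {1,…,k}, H(Π₁ | X_{−i}, R_{−i}, Πᵢ) = 0 (i.e., Π₁ is determined by the inputs and randomness of all players other than i together with Πᵢ). Suppose there is a deterministic function θ with Pr[θ(X₁, R₁, Π₁) = X₁ ⊕ X₂ ⊕ ⋯ ⊕ X_k] ≥ 1 − ε. Then Σ_{i=1}^k [ I(X_{−i}; Πᵢ | Xᵢ, Rᵢ) + I(Xᵢ; Πᵢ | X_{−i}, R_{−i}) ] ≥ (k−1)·(1 − h_b(ε)), where h_b is the binary entropy function. -/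
open Finset

noncomputable section

open Classical in
/-- Probability of an event under a probability mass function on a finite sample space. -/
def pr {Ω : Type*} [Fintype Ω] (p : Ω → ℝ) (E : Ω → Prop) : ℝ :=
  ∑ ω ∈ Finset.univ.filter E, p ω

open Classical in
/-- Shannon entropy (in bits) of a discrete random variable on a finite sample space. -/
def entropy {Ω A : Type*} [Fintype Ω] (p : Ω → ℝ) (X : Ω → A) : ℝ :=
  -∑ a ∈ Finset.univ.image X,
    pr p (fun ω => X ω = a) * Real.logb 2 (pr p (fun ω => X ω = a))

open Classical in
/-- Conditional entropy `H(X | Y) = ∑_y Pr[Y=y] · H(X | Y=y)` (in bits). -/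
def condEntropy {Ω A B : Type*} [Fintype Ω] (p : Ω → ℝ) (X : Ω → A) (Y : Ω → B) : ℝ :=
  ∑ b ∈ Finset.univ.image Y,
    pr p (fun ω => Y ω = b) *
      (-∑ a ∈ Finset.univ.image X,
        (pr p (fun ω => X ω = a ∧ Y ω = b) / pr p (fun ω => Y ω = b)) *
          Real.logb 2
            (pr p (fun ω => X ω = a ∧ Y ω = b) / pr p (fun ω => Y ω = b)))

/-- Conditional mutual information `I(X;Y | Z) = H(X|Z) − H(X|Y,Z)` (in bits). -/
def condMutualInfo {Ω A B C : Type*} [Fintype Ω] (p : Ω → ℝ)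
    (X : Ω → A) (Y : Ω → B) (Z : Ω → C) : ℝ :=
  condEntropy p X Z - condEntropy p X (fun ω => (Y ω, Z ω))

/-- The binary entropy function `h_b(ε) = ε·log₂(1/ε) + (1−ε)·log₂(1/(1−ε))`
(with `h_b(0) = 0`, by the convention `log₂(1/0) = 0`). -/
def binEnt (ε : ℝ) : ℝ :=
  ε * Real.logb 2 (1 / ε) + (1 - ε) * Real.logb 2 (1 / (1 - ε))

section Helpers

variable {Ω A B C : Type*} [Fintype Ω]

open Classical in
lemma pr_eq_ite (p : Ω → ℝ) (E : Ω → Prop) : pr p E = ∑ ω, if E ω then p ω else 0 := by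
  unfold pr
  rw [Finset.sum_filter]

lemma pr_congr_ev (p : Ω → ℝ) {E F : Ω → Prop} (h : ∀ ω, E ω ↔ F ω) : pr p E = pr p F := by
  have : E = F := funext fun ω => propext (h ω)
  rw [this]

lemma pr_nonneg' (p : Ω → ℝ) (hp : ∀ ω, 0 ≤ p ω) (E : Ω → Prop) : 0 ≤ pr p E := by
  unfold pr
  exact Finset.sum_nonneg fun ω _ => hp ω

lemma pr_mono' (p : Ω → ℝ) (hp : ∀ ω, 0 ≤ p ω) {E F : Ω → Prop} (h : ∀ ω, E ω → F ω) :
    pr p E ≤ pr p F := by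
  classical
  rw [pr_eq_ite, pr_eq_ite]
  refine Finset.sum_le_sum fun ω _ => ?_
  by_cases hE : E ω
  · simp [hE, h ω hE]
  · simp only [hE, if_false]
    split_ifs
    · exact hp ω
    · exact le_rfl

lemma pr_pos' (p : Ω → ℝ) (hp : ∀ ω, 0 ≤ p ω) {E : Ω → Prop} {ω : Ω} (hω : 0 < p ω)
    (hE : E ω) : 0 < pr p E := by
  classical
  refine lt_of_lt_of_le hω ?_
  unfold pr
  exact Finset.single_le_sum (f := p) (fun x _ => hp x) (by simp [hE])

/-- Splitting an event over an exhaustive finite family of values. -/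
lemma pr_fiber (p : Ω → ℝ) (E : Ω → Prop) (X : Ω → A) (S : Finset A) (hS : ∀ ω, X ω ∈ S) :
    ∑ a ∈ S, pr p (fun ω => X ω = a ∧ E ω) = pr p E := by
  classical
  simp only [pr_eq_ite]
  rw [Finset.sum_comm]
  refine Finset.sum_congr rfl fun ω _ => ?_
  rw [Finset.sum_eq_single (X ω)]
  · simp
  · intro b _ hb
    simp [Ne.symm hb]
  · intro h
    exact absurd (hS ω) h

/-- Change of variables. -/
lemma sum_pr_mul (p : Ω → ℝ) (X : Ω → A) (S : Finset A) (hS : ∀ ω, X ω ∈ S) (F : A → ℝ) :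
    ∑ a ∈ S, pr p (fun ω => X ω = a) * F a = ∑ ω, p ω * F (X ω) := by
  classical
  simp only [pr_eq_ite, Finset.sum_mul]
  rw [Finset.sum_comm]
  refine Finset.sum_congr rfl fun ω _ => ?_
  rw [Finset.sum_eq_single (X ω)]
  · simp
  · intro b _ hb
    simp [Ne.symm hb]
  · intro h
    exact absurd (hS ω) h

lemma sum_pr_mul₂ (p : Ω → ℝ) (X : Ω → A) (Y : Ω → B) (S : Finset A) (T : Finset B)
    (hS : ∀ ω, X ω ∈ S) (hT : ∀ ω, Y ω ∈ T) (F : A → B → ℝ) :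
    ∑ b ∈ T, ∑ a ∈ S, pr p (fun ω => X ω = a ∧ Y ω = b) * F a b
      = ∑ ω, p ω * F (X ω) (Y ω) := by
  have h := sum_pr_mul p (fun ω => (X ω, Y ω)) (S ×ˢ T)
    (fun ω => Finset.mem_product.2 ⟨hS ω, hT ω⟩) (fun x => F x.1 x.2)
  rw [← h, Finset.sum_product_right]
  refine Finset.sum_congr rfl fun b _ => Finset.sum_congr rfl fun a _ => ?_
  congr 1
  exact pr_congr_ev p fun ω => by simp

/-- Conditional probability `Pr[X = a | Y = b]`. -/
def cpr (p : Ω → ℝ) (X : Ω → A) (Y : Ω → B) (a : A) (b : B) : ℝ :=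
  pr p (fun ω => X ω = a ∧ Y ω = b) / pr p (fun ω => Y ω = b)

lemma joint_le (p : Ω → ℝ) (hp : ∀ ω, 0 ≤ p ω) (X : Ω → A) (Y : Ω → B) (a : A) (b : B) :
    pr p (fun ω => X ω = a ∧ Y ω = b) ≤ pr p (fun ω => Y ω = b) :=
  pr_mono' p hp fun _ h => h.2

lemma condEntropy_eq (p : Ω → ℝ) (hp : ∀ ω, 0 ≤ p ω) (X : Ω → A) (Y : Ω → B) :
    condEntropy p X Y = ∑ ω, p ω * (-Real.logb 2 (cpr p X Y (X ω) (Y ω))) := by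
  classical
  rw [← sum_pr_mul₂ p X Y (univ.image X) (univ.image Y) (by simp) (by simp)
    (fun a b => -Real.logb 2 (cpr p X Y a b))]
  unfold condEntropy
  refine Finset.sum_congr ?_ fun b _ => ?_
  · congr
  rw [← Finset.sum_neg_distrib, Finset.mul_sum]
  refine Finset.sum_congr ?_ fun a _ => ?_
  · congr
  have h1 := joint_le p hp X Y a b
  have h0 := pr_nonneg' p hp (fun ω => X ω = a ∧ Y ω = b)
  unfold cpr
  by_cases hb : pr p (fun ω => Y ω = b) = 0
  · have : pr p (fun ω => X ω = a ∧ Y ω = b) = 0 := by linarith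
    rw [hb, this]; simp
  · field_simp

lemma cpr_pos (p : Ω → ℝ) (hp : ∀ ω, 0 ≤ p ω) (X : Ω → A) (Y : Ω → B) {ω : Ω} (hω : 0 < p ω) :
    0 < cpr p X Y (X ω) (Y ω) :=
  div_pos (pr_pos' p hp hω ⟨rfl, rfl⟩) (pr_pos' p hp hω rfl)

lemma cpr_nonneg (p : Ω → ℝ) (hp : ∀ ω, 0 ≤ p ω) (X : Ω → A) (Y : Ω → B) (a : A) (b : B) :
    0 ≤ cpr p X Y a b :=
  div_nonneg (pr_nonneg' p hp _) (pr_nonneg' p hp _)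

lemma cpr_le_one (p : Ω → ℝ) (hp : ∀ ω, 0 ≤ p ω) (X : Ω → A) (Y : Ω → B) (a : A) (b : B) :
    cpr p X Y a b ≤ 1 :=
  div_le_one_of_le₀ (joint_le p hp X Y a b) (pr_nonneg' p hp _)

/-- Gibbs' inequality. -/
lemma condEntropy_le_cross (p : Ω → ℝ) (hp : ∀ ω, 0 ≤ p ω) (hsum : ∑ ω, p ω = 1)
    (X : Ω → A) (Y : Ω → B) (S : Finset A) (hS : ∀ ω, X ω ∈ S)
    (f : A → B → ℝ) (hf0 : ∀ a b, 0 ≤ f a b)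
    (hf1 : ∀ b, ∑ a ∈ S, f a b ≤ 1) (hfpos : ∀ ω, 0 < p ω → 0 < f (X ω) (Y ω)) :
    condEntropy p X Y ≤ ∑ ω, p ω * (-Real.logb 2 (f (X ω) (Y ω))) := by
  classical
  rw [condEntropy_eq p hp]
  have hlog2 : 0 < Real.log 2 := Real.log_pos (by norm_num)
  have key : ∑ ω, p ω * (f (X ω) (Y ω) / cpr p X Y (X ω) (Y ω)) ≤ 1 := by
    rw [← sum_pr_mul₂ p X Y S (univ.image Y) hS (by simp)
      (fun a b => f a b / cpr p X Y a b)]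
    have h2 : ∑ b ∈ univ.image Y, pr p (fun ω => Y ω = b) * 1 = 1 := by
      rw [sum_pr_mul p Y _ (by simp) (fun _ => (1 : ℝ))]
      simpa using hsum
    rw [← h2]
    refine Finset.sum_le_sum fun b _ => ?_
    refine le_trans ?_ (mul_le_mul_of_nonneg_left (hf1 b) (pr_nonneg' p hp _))
    rw [Finset.mul_sum]
    refine Finset.sum_le_sum fun a _ => ?_
    have h1 := joint_le p hp X Y a b
    have h0 := pr_nonneg' p hp (fun ω => X ω = a ∧ Y ω = b)
    have hfab := hf0 a b
    rcases h0.eq_or_lt with h | h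
    · rw [← h, zero_mul]
      exact mul_nonneg (pr_nonneg' p hp _) hfab
    · have h3 : 0 < pr p (fun ω => Y ω = b) := lt_of_lt_of_le h h1
      unfold cpr
      apply le_of_eq
      field_simp
  have main : ∀ ω, p ω * (-Real.logb 2 (cpr p X Y (X ω) (Y ω)))
      - p ω * (-Real.logb 2 (f (X ω) (Y ω)))
      ≤ (p ω * (f (X ω) (Y ω) / cpr p X Y (X ω) (Y ω)) - p ω) / Real.log 2 := by
    intro ω
    rcases (hp ω).eq_or_lt with h | h
    · rw [← h]; simp
    · have c0 := cpr_pos p hp X Y h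
      have f0 := hfpos ω h
      have hl := Real.log_le_sub_one_of_pos (div_pos f0 c0)
      rw [Real.log_div f0.ne' c0.ne'] at hl
      rw [le_div_iff₀ hlog2]
      unfold Real.logb
      have := mul_le_mul_of_nonneg_left hl h.le
      field_simp
      field_simp at this
      linarith
  have h3 := Finset.sum_le_sum fun ω (_ : ω ∈ univ) => main ω
  rw [← Finset.sum_div, Finset.sum_sub_distrib, Finset.sum_sub_distrib, hsum] at h3
  have h4 : (∑ ω, p ω * (f (X ω) (Y ω) / cpr p X Y (X ω) (Y ω)) - 1) / Real.log 2 ≤ 0 :=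
    div_nonpos_of_nonpos_of_nonneg (by linarith) hlog2.le
  linarith

lemma condMutualInfo_nonneg' (p : Ω → ℝ) (hp : ∀ ω, 0 ≤ p ω) (hsum : ∑ ω, p ω = 1)
    (X : Ω → A) (Y : Ω → B) (Z : Ω → C) : 0 ≤ condMutualInfo p X Y Z := by
  classical
  unfold condMutualInfo
  rw [sub_nonneg, condEntropy_eq p hp X Z]
  refine condEntropy_le_cross p hp hsum X (fun ω => (Y ω, Z ω)) (univ.image X) (by simp)
    (fun a b => cpr p X Z a b.2) (fun a b => cpr_nonneg p hp X Z a b.2) ?_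
    (fun ω h => cpr_pos p hp X Z h)
  intro b
  unfold cpr
  rw [← Finset.sum_div, pr_fiber p (fun ω => Z ω = b.2) X _ (by simp)]
  exact div_self_le_one _

lemma det_of_condEntropy_zero (p : Ω → ℝ) (hp : ∀ ω, 0 ≤ p ω) (X : Ω → A) (Y : Ω → B)
    (h : condEntropy p X Y = 0) {ω ω' : Ω} (hω : 0 < p ω) (hω' : 0 < p ω')
    (hY : Y ω' = Y ω) : X ω' = X ω := by
  classical
  rw [condEntropy_eq p hp, Finset.sum_eq_zero_iff_of_nonneg] at h
  · have h1 := h ω (mem_univ _)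
    have c0 := cpr_pos p hp X Y hω
    have c1 := cpr_le_one p hp X Y (X ω) (Y ω)
    have h2 : Real.logb 2 (cpr p X Y (X ω) (Y ω)) = 0 := by
      rcases mul_eq_zero.1 h1 with h | h
      · exact absurd h hω.ne'
      · linarith
    have h3 : cpr p X Y (X ω) (Y ω) = 1 := by
      by_contra hne
      have := Real.logb_neg (b := 2) (by norm_num) c0 (lt_of_le_of_ne c1 hne)
      linarith
    unfold cpr at h3
    have h4 : pr p (fun x => Y x = Y ω) ≠ 0 :=
      (pr_pos' p hp (E := fun x => Y x = Y ω) hω rfl).ne'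
    rw [div_eq_one_iff_eq h4] at h3
    by_contra hne
    have h5 := pr_fiber p (fun x => Y x = Y ω) (fun x => decide (X x = X ω)) univ
      (fun _ => mem_univ _)
    rw [Fintype.sum_bool] at h5
    simp only [decide_eq_true_eq, decide_eq_false_iff_not] at h5
    have h6 : 0 < pr p (fun x => ¬ X x = X ω ∧ Y x = Y ω) := pr_pos' p hp hω' ⟨hne, hY⟩
    linarith
  · intro x _
    rcases (hp x).eq_or_lt with h | h
    · rw [← h]; simp
    · refine mul_nonneg h.le (neg_nonneg.2 ?_)
      exact Real.logb_nonpos (by norm_num) (cpr_nonneg p hp X Y _ _) (cpr_le_one p hp X Y _ _)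

/-- Fano's inequality for a bit. -/
lemma fano_bit (p : Ω → ℝ) (hp : ∀ ω, 0 ≤ p ω) (hsum : ∑ ω, p ω = 1)
    (ε : ℝ) (hε0 : 0 ≤ ε) (hε1 : ε ≤ 1 / 2) (X : Ω → ZMod 2) (Y : Ω → B) (g : B → ZMod 2)
    (hg : 1 - ε ≤ pr p (fun ω => g (Y ω) = X ω)) : condEntropy p X Y ≤ binEnt ε := by
  classical
  have hsplit : pr p (fun ω => g (Y ω) = X ω) + pr p (fun ω => ¬ g (Y ω) = X ω) = 1 := by
    rw [pr_eq_ite, pr_eq_ite, ← Finset.sum_add_distrib, ← hsum]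
    refine Finset.sum_congr rfl fun ω _ => ?_
    by_cases h : g (Y ω) = X ω <;> simp [h]
  refine (condEntropy_le_cross p hp hsum X Y univ (by simp)
    (fun a b => if g b = a then 1 - ε else ε) ?_ ?_ ?_).trans ?_
  · intro a b
    split_ifs <;> linarith
  · intro b
    have : ∀ c : ZMod 2, ∑ a : ZMod 2, (if c = a then 1 - ε else ε) = 1 := by
      intro c
      have h2 : (univ : Finset (ZMod 2)) = {0, 1} := by decide
      rw [h2, Finset.sum_pair (by decide)]
      have : c = 0 ∨ c = 1 := by revert c; decide
      rcases this with rfl | rfl <;> simp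
    exact (this _).le
  · intro ω hω
    split_ifs with h
    · linarith
    · have := pr_pos' p hp (E := fun ω => ¬ g (Y ω) = X ω) hω h
      linarith
  · have : ∑ ω, p ω * (-Real.logb 2 (if g (Y ω) = X ω then 1 - ε else ε))
        = pr p (fun ω => g (Y ω) = X ω) * (-Real.logb 2 (1 - ε))
          + pr p (fun ω => ¬ g (Y ω) = X ω) * (-Real.logb 2 ε) := by
      rw [pr_eq_ite, pr_eq_ite, Finset.sum_mul, Finset.sum_mul, ← Finset.sum_add_distrib]
      refine Finset.sum_congr rfl fun ω _ => ?_
      by_cases h : g (Y ω) = X ω <;> simp [h]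
    rw [this]
    unfold binEnt
    rw [one_div, one_div, Real.logb_inv, Real.logb_inv]
    have hw : pr p (fun ω => ¬ g (Y ω) = X ω) ≤ ε := by linarith
    have hw0 := pr_nonneg' p hp (fun ω => ¬ g (Y ω) = X ω)
    rcases hε0.eq_or_lt with h | h
    · subst h
      simp
    · have hl : Real.logb 2 ε ≤ Real.logb 2 (1 - ε) :=
        Real.logb_le_logb_of_le (by norm_num) h (by linarith)
      have hc : pr p (fun ω => g (Y ω) = X ω) = 1 - pr p (fun ω => ¬ g (Y ω) = X ω) := by linarith
      rw [hc]
      nlinarith [mul_nonneg (sub_nonneg.2 hw) (sub_nonneg.2 hl)]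

lemma indep_event {D : Type*} (p : Ω → ℝ) (X : Ω → A) (R : Ω → B)
    (hindep : ∀ v r, pr p (fun ω => X ω = v ∧ R ω = r) =
      pr p (fun ω => X ω = v) * pr p (fun ω => R ω = r)) (F : B → D) (v : A) (s : D) :
    pr p (fun ω => X ω = v ∧ F (R ω) = s) =
      pr p (fun ω => X ω = v) * pr p (fun ω => F (R ω) = s) := by
  classical
  rw [← pr_fiber p (fun ω => X ω = v ∧ F (R ω) = s) R (univ.image R) (by simp),
    ← pr_fiber p (fun ω => F (R ω) = s) R (univ.image R) (by simp), Finset.mul_sum]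
  refine Finset.sum_congr rfl fun r _ => ?_
  by_cases h : F r = s
  · rw [pr_congr_ev p (F := fun ω => X ω = v ∧ R ω = r),
      pr_congr_ev p (E := fun ω => R ω = r ∧ F (R ω) = s) (F := fun ω => R ω = r), hindep]
    · intro ω
      exact ⟨fun h => h.1, fun h' => ⟨h', by rw [h', h]⟩⟩
    · intro ω
      exact ⟨fun h => ⟨h.2.1, h.1⟩, fun h' => ⟨h'.2, h'.1, by rw [h'.2, h]⟩⟩
  · rw [pr_congr_ev p (F := fun _ => False),
      pr_congr_ev p (E := fun ω => R ω = r ∧ F (R ω) = s) (F := fun _ => False)]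
    · simp [pr]
    · intro ω
      simp only [iff_false]
      rintro ⟨h1, h2⟩
      exact h (h1 ▸ h2)
    · intro ω
      simp only [iff_false]
      rintro ⟨h1, _, h2⟩
      exact h (h1 ▸ h2)

lemma condEntropy_bit {k : ℕ} (p : Ω → ℝ) (hp : ∀ ω, 0 ≤ p ω) (hsum : ∑ ω, p ω = 1)
    {ρ : Fin k → Type*} (X : Ω → Fin k → ZMod 2) (R : Ω → ∀ i, ρ i)
    (huniform : ∀ v : Fin k → ZMod 2, pr p (fun ω => X ω = v) = (1 / 2 : ℝ) ^ k)
    (hindep : ∀ (v : Fin k → ZMod 2) (r : ∀ i, ρ i),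
      pr p (fun ω => X ω = v ∧ R ω = r) =
        pr p (fun ω => X ω = v) * pr p (fun ω => R ω = r)) (i : Fin k) :
    condEntropy p (fun ω => X ω i)
      (fun ω => ((fun j : {j : Fin k // j ≠ i} => X ω j.1),
                 (fun j : {j : Fin k // j ≠ i} => R ω j.1))) = 1 := by
  classical
  rw [condEntropy_eq p hp]
  have hj : ∀ (a : ZMod 2) (ω₀ : Ω), pr p (fun ω => X ω i = a ∧
      ((fun j : {j : Fin k // j ≠ i} => X ω j.1), (fun j : {j : Fin k // j ≠ i} => R ω j.1))
      = ((fun j : {j : Fin k // j ≠ i} => X ω₀ j.1), (fun j : {j : Fin k // j ≠ i} => R ω₀ j.1)))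
      = (1 / 2 : ℝ) ^ k * pr p (fun ω => (fun j : {j : Fin k // j ≠ i} => R ω j.1)
          = (fun j : {j : Fin k // j ≠ i} => R ω₀ j.1)) := by
    intro a ω₀
    rw [← huniform (Function.update (X ω₀) i a), ← indep_event p X R hindep
      (fun r => fun j : {j : Fin k // j ≠ i} => r j.1)]
    refine pr_congr_ev p fun ω => ?_
    rw [Prod.mk.injEq, ← and_assoc]
    refine and_congr_left fun _ => ?_
    constructor
    · rintro ⟨h1, h2⟩
      funext j
      by_cases hji : j = i
      · subst hji; simpa using h1
      · rw [Function.update_of_ne hji]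
        exact congrFun h2 ⟨j, hji⟩
    · intro h
      refine ⟨by rw [h]; simp, ?_⟩
      funext j
      rw [h, Function.update_of_ne j.2]
  have hterm : ∀ ω, p ω * (-Real.logb 2 (cpr p (fun ω => X ω i)
      (fun ω => ((fun j : {j : Fin k // j ≠ i} => X ω j.1),
                 (fun j : {j : Fin k // j ≠ i} => R ω j.1))) (X ω i)
      ((fun j : {j : Fin k // j ≠ i} => X ω j.1),
                 (fun j : {j : Fin k // j ≠ i} => R ω j.1)))) = p ω := by
    intro ω
    rcases (hp ω).eq_or_lt with h | h
    · rw [← h]; simp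
    · have hpos : 0 < pr p (fun ω' => (fun j : {j : Fin k // j ≠ i} => R ω' j.1)
          = (fun j : {j : Fin k // j ≠ i} => R ω j.1)) := pr_pos' p hp h rfl
      unfold cpr
      rw [← pr_fiber p (fun ω' => ((fun j : {j : Fin k // j ≠ i} => X ω' j.1),
          (fun j : {j : Fin k // j ≠ i} => R ω' j.1)) = ((fun j : {j : Fin k // j ≠ i} => X ω j.1),
          (fun j : {j : Fin k // j ≠ i} => R ω j.1))) (fun ω' => X ω' i) univ (by simp)]
      simp only [hj]
      rw [Finset.sum_const, Finset.card_univ, ZMod.card]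
      have hk2 : (0 : ℝ) < (1 / 2 : ℝ) ^ k := by positivity
      have : ∀ c : ℝ, 0 < c → c / (2 • c) = 2⁻¹ := by
        intro c hc
        rw [two_nsmul]
        field_simp
        norm_num
      rw [this _ (mul_pos hk2 hpos), Real.logb_inv, Real.logb_self_eq_one (by norm_num)]
      simp
  rw [Finset.sum_congr rfl fun ω _ => hterm ω, hsum]

end Helpers

/-- Multi-party information cost lower bound for parity.  Let `X` be uniform on
`{0,1}^k`, `R` (the players' private randomness) independent of `X`, and `Tr i`
(player `i`'s transcript) such that player 1's transcript is determined by the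
inputs and randomness of all players other than `i` together with `Tr i`.
If a deterministic function of `(X₁, R₁, Tr₁)` equals `X₁ ⊕ ⋯ ⊕ X_k` with
probability at least `1 − ε`, then
`∑ᵢ (I(X₋ᵢ; Trᵢ | Xᵢ Rᵢ) + I(Xᵢ; Trᵢ | X₋ᵢ R₋ᵢ)) ≥ (k−1)(1 − h_b(ε))`. -/
theorem mic_parity_lower_bound {Ω : Type*} [Fintype Ω]
    {k : ℕ} (hk : 0 < k)
    (ε : ℝ) (hε0 : 0 ≤ ε) (hε1 : ε ≤ 1 / 2)
    (p : Ω → ℝ) (hp : ∀ ω, 0 ≤ p ω) (hsum : ∑ ω, p ω = 1)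
    (ρ τ : Fin k → Type*)
    (X : Ω → Fin k → ZMod 2) (R : Ω → ∀ i, ρ i) (Tr : Ω → ∀ i, τ i)
    (huniform : ∀ v : Fin k → ZMod 2,
      pr p (fun ω => X ω = v) = (1 / 2 : ℝ) ^ k)
    (hindep : ∀ (v : Fin k → ZMod 2) (r : ∀ i, ρ i),
      pr p (fun ω => X ω = v ∧ R ω = r) =
        pr p (fun ω => X ω = v) * pr p (fun ω => R ω = r))
    (hdet : ∀ i : Fin k,
      condEntropy p (fun ω => Tr ω ⟨0, hk⟩)
        (fun ω => ((fun j : {j : Fin k // j ≠ i} => X ω j.1),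
                   (fun j : {j : Fin k // j ≠ i} => R ω j.1),
                   Tr ω i)) = 0)
    (θ : ZMod 2 → ρ ⟨0, hk⟩ → τ ⟨0, hk⟩ → ZMod 2)
    (hcorrect : 1 - ε ≤ pr p (fun ω =>
      θ (X ω ⟨0, hk⟩) (R ω ⟨0, hk⟩) (Tr ω ⟨0, hk⟩) = ∑ j, X ω j)) :
    ((k : ℝ) - 1) * (1 - binEnt ε) ≤
      ∑ i : Fin k,
        (condMutualInfo p (fun ω => fun j : {j : Fin k // j ≠ i} => X ω j.1)
            (fun ω => Tr ω i) (fun ω => (X ω i, R ω i)) +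
          condMutualInfo p (fun ω => X ω i) (fun ω => Tr ω i)
            (fun ω => ((fun j : {j : Fin k // j ≠ i} => X ω j.1),
                       (fun j : {j : Fin k // j ≠ i} => R ω j.1)))) := by
  classical
  have hnn : ∀ i : Fin k, 0 ≤ condMutualInfo p (fun ω => fun j : {j : Fin k // j ≠ i} => X ω j.1)
            (fun ω => Tr ω i) (fun ω => (X ω i, R ω i)) +
          condMutualInfo p (fun ω => X ω i) (fun ω => Tr ω i)
            (fun ω => ((fun j : {j : Fin k // j ≠ i} => X ω j.1),
                       (fun j : {j : Fin k // j ≠ i} => R ω j.1))) := fun i =>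
    add_nonneg (condMutualInfo_nonneg' p hp hsum _ _ _) (condMutualInfo_nonneg' p hp hsum _ _ _)
  rw [← Finset.sum_erase_add _ _ (mem_univ (⟨0, hk⟩ : Fin k))]
  refine le_trans ?_ (le_add_of_nonneg_right (hnn _))
  have hcard : ((univ.erase (⟨0, hk⟩ : Fin k)).card : ℝ) = (k : ℝ) - 1 := by
    rw [Finset.card_erase_of_mem (mem_univ _), Finset.card_univ, Fintype.card_fin,
      Nat.cast_sub hk]
    simp
  rw [← hcard, ← nsmul_eq_mul]
  refine Finset.card_nsmul_le_sum _ _ _ fun i hi => ?_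
  have hi0 : (⟨0, hk⟩ : Fin k) ≠ i := fun h => (Finset.mem_erase.1 hi).1 h.symm
  refine le_trans ?_ (le_add_of_nonneg_left (condMutualInfo_nonneg' p hp hsum _ _ _))
  unfold condMutualInfo
  rw [condEntropy_bit p hp hsum X R huniform hindep i]
  refine sub_le_sub_left ?_ 1
  let W : Ω → τ i × (({j : Fin k // j ≠ i} → ZMod 2) × (∀ j : {j : Fin k // j ≠ i}, ρ j.1)) :=
    fun ω => (Tr ω i, ((fun j : {j : Fin k // j ≠ i} => X ω j.1),
                       (fun j : {j : Fin k // j ≠ i} => R ω j.1)))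
  let G : Ω → ZMod 2 := fun ω => θ (X ω ⟨0, hk⟩) (R ω ⟨0, hk⟩) (Tr ω ⟨0, hk⟩)
    - ∑ j ∈ univ.erase i, X ω j
  have hG : ∀ ω ω', 0 < p ω → 0 < p ω' → W ω' = W ω → G ω' = G ω := by
    intro ω ω' hω hω' hW
    simp only [W, Prod.mk.injEq] at hW
    obtain ⟨hT, hX, hR⟩ := hW
    have h1 := det_of_condEntropy_zero p hp _ _ (hdet i) hω hω' (by
      simp only [Prod.mk.injEq]
      exact ⟨hX, hR, hT⟩)
    have h2 : X ω' ⟨0, hk⟩ = X ω ⟨0, hk⟩ := congrFun hX ⟨_, hi0⟩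
    have h3 : R ω' ⟨0, hk⟩ = R ω ⟨0, hk⟩ := congrFun hR ⟨_, hi0⟩
    have h4 : ∑ j ∈ univ.erase i, X ω' j = ∑ j ∈ univ.erase i, X ω j :=
      Finset.sum_congr rfl fun j hj => congrFun hX ⟨j, (Finset.mem_erase.1 hj).1⟩
    simp only [G]
    rw [h2, h3, h4]
    rw [h1]
  let g : τ i × (({j : Fin k // j ≠ i} → ZMod 2) × (∀ j : {j : Fin k // j ≠ i}, ρ j.1)) → ZMod 2 :=
    fun w => if h : ∃ ω, 0 < p ω ∧ W ω = w then G h.choose else 0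
  have hgG : ∀ ω, 0 < p ω → g (W ω) = G ω := by
    intro ω hω
    have h : ∃ ω', 0 < p ω' ∧ W ω' = W ω := ⟨ω, hω, rfl⟩
    simp only [g]
    rw [dif_pos h]
    exact hG _ _ hω h.choose_spec.1 h.choose_spec.2
  refine fano_bit p hp hsum ε hε0 hε1 (fun ω => X ω i) W g (hcorrect.trans (le_of_eq ?_))
  rw [pr_eq_ite, pr_eq_ite]
  refine Finset.sum_congr rfl fun ω _ => ?_
  rcases (hp ω).eq_or_lt with h | h
  · rw [← h]; simp
  · rw [hgG ω h]
    have : (θ (X ω ⟨0, hk⟩) (R ω ⟨0, hk⟩) (Tr ω ⟨0, hk⟩) = ∑ j, X ω j) ↔ G ω = X ω i := by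
      rw [← Finset.sum_erase_add _ _ (mem_univ i)]
      simp only [G]
      rw [sub_eq_iff_eq_add, add_comm]
    by_cases hG' : G ω = X ω i
    · rw [if_pos (this.2 hG'), if_pos hG']
    · rw [if_neg (fun h' => hG' (this.1 h')), if_neg hG']
end
end
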